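/- Let H and M be real symmetric positive definite n×n matrices, let μ, L′ > 0 satisfy μ·‖v‖² ≤ vᵀ·H·v ≤ L′·‖v‖² for all v ∈ ℝⁿ (Euclidean norm), and let ε > 0 satisfy M ≈_ε H. Then for every v ∈ ℝⁿ, ‖v − M⁻¹·H·v‖ ≤ sqrt(L′/μ) · c(ε) · ‖v‖, where c(ε) := sqrt(1 + e^{2ε} − 2e^{−ε}) and ‖·‖ is the Euclidean norm. -/

import Mathlib

open Matrix

/-- `A ≈_ε B`: `e^{-ε}·B ⪯ A ⪯ e^{ε}·B` in the Loewner order. -/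
def SpecApprox {ι : Type*} [Fintype ι] (ε : ℝ) (A B : Matrix ι ι ℝ) : Prop :=
  (A - Real.exp (-ε) • B).PosSemidef ∧ (Real.exp ε • B - A).PosSemidef

/-- `‖X‖_L = sqrt(trace(Xᵀ L X))`. -/
noncomputable def Lnorm {ι κ : Type*} [Fintype ι] [Fintype κ]
    (L : Matrix ι ι ℝ) (X : Matrix ι κ ℝ) : ℝ :=
  Real.sqrt (Xᵀ * L * X).trace

/-- `c(ε) = sqrt(1 + e^{2ε} − 2e^{−ε})`. -/
noncomputable def cEps (ε : ℝ) : ℝ :=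
  Real.sqrt (1 + Real.exp (2 * ε) - 2 * Real.exp (-ε))

/-!
Write `u = M⁻¹ H v`, so that `⟨w, M u⟩ = ⟨w, H v⟩` for every `w`, and work in the energy norm of
`H`: `‖v - u‖_H² = ‖v‖_H² - 2 ⟨u, H v⟩ + ‖u‖_H²`. Suppose `a M ⪯ H ⪯ b M` with `0 ≤ a`. Expanding
`‖u - a v‖_M² ≥ 0` gives `⟨u, H v⟩ ≥ a ‖v‖_H²`; expanding `‖u - b v‖_H² ≥ 0` and using
`‖u‖_H² ≤ b ‖u‖_M² = b ⟨u, H v⟩` gives `‖u‖_H² ≤ b² ‖v‖_H²`. Hence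
`‖v - u‖_H² ≤ (1 + b² - 2 a) ‖v‖_H²`, and the factor is `c(ε)²` for `a = e^{-ε}` and `b = e^ε`.
Passing between the energy norm and the Euclidean norm costs the factor `√(L' / μ)`.
-/

section BilinForm

variable {R V : Type*} [CommRing R] [AddCommGroup V] [Module R V] {H M : LinearMap.BilinForm R V}

theorem apply_sub_self_of_isSymm (hH : H.IsSymm) (x y : V) :
    H (x - y) (x - y) = H x x - 2 * H y x + H y y := by
  simp only [map_sub, LinearMap.sub_apply, hH.eq x y]
  ring

variable [LinearOrder R] [IsStrictOrderedRing R]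

theorem two_mul_apply_le_add_of_isPosSemidef (hH : H.IsPosSemidef) (c : R) (x y : V) :
    2 * c * H x y ≤ H x x + c ^ 2 * H y y := by
  have h_nonneg : 0 ≤ H (x - c • y) (x - c • y) := hH.nonneg _
  simp only [apply_sub_self_of_isSymm hH.isSymm, map_smul, LinearMap.smul_apply, smul_eq_mul,
    hH.isSymm.eq y x] at h_nonneg
  linarith

theorem mul_apply_self_le_apply (hM : M.IsPosSemidef) {a : R} (ha : 0 ≤ a) {u v : V}
    (hu : ∀ w, M w u = H w v) (hMH : a * M v v ≤ H v v) :
    a * H v v ≤ H u v := by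
  have h_sq : a * (a * M v v) ≤ a * H v v := mul_le_mul_of_nonneg_left hMH ha
  have h_cross := two_mul_apply_le_add_of_isPosSemidef hM a u v
  rw [hM.isSymm.eq u v, hu u, hu v] at h_cross
  linarith

theorem apply_self_le_sq_mul_apply_self (hH : H.IsPosSemidef) {b : R} {u v : V}
    (hu : ∀ w, M w u = H w v) (hHM : H u u ≤ b * M u u) :
    H u u ≤ b ^ 2 * H v v := by
  rw [hu u] at hHM
  linarith [two_mul_apply_le_add_of_isPosSemidef hH b u v]

theorem apply_sub_self_le_mul_apply_self (hH : H.IsPosSemidef) (hM : M.IsPosSemidef)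
    {a b : R} (ha : 0 ≤ a) {u v : V} (hu : ∀ w, M w u = H w v)
    (hMH : a * M v v ≤ H v v) (hHM : H u u ≤ b * M u u) :
    H (v - u) (v - u) ≤ (1 + b ^ 2 - 2 * a) * H v v := by
  rw [apply_sub_self_of_isSymm hH.isSymm]
  linarith [mul_apply_self_le_apply hM ha hu hMH, apply_self_le_sq_mul_apply_self hH hu hHM]

end BilinForm

section EnergyNorm

variable {V : Type*} [AddCommGroup V] [Module ℝ V] {G H M : LinearMap.BilinForm ℝ V}

/-- The energy norm `‖v‖_B = √(B(v, v))` of a bilinear form `B`: the norm in which the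
preconditioning error contracts by a factor independent of the conditioning of `B`. It is a seminorm
when `B` is positive semidefinite; its value is `0` wherever `B(v, v) < 0`. -/
noncomputable def energyNorm (B : LinearMap.BilinForm ℝ V) (v : V) : ℝ :=
  √(B v v)

theorem energyNorm_le_sqrt_mul_energyNorm {c : ℝ} {x y : V} (hy : 0 ≤ H y y)
    (h : G x x ≤ c * H y y) : energyNorm G x ≤ √c * energyNorm H y := by
  rw [energyNorm, energyNorm, ← Real.sqrt_mul' c hy]
  exact Real.sqrt_le_sqrt h

theorem energyNorm_sub_le (hH : H.IsPosSemidef) (hM : M.IsPosSemidef) {a b : ℝ} (ha : 0 ≤ a)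
    {u v : V} (hu : ∀ w, M w u = H w v) (hMH : a * M v v ≤ H v v) (hHM : H u u ≤ b * M u u) :
    energyNorm H (v - u) ≤ √(1 + b ^ 2 - 2 * a) * energyNorm H v :=
  energyNorm_le_sqrt_mul_energyNorm (hH.nonneg v)
    (apply_sub_self_le_mul_apply_self hH hM ha hu hMH hHM)

theorem energyNorm_le_sqrt_div_mul_of_energyNorm_le {μ L c : ℝ} (hμ : 0 < μ) (hc : 0 ≤ c) {x y : V}
    (hx_nonneg : 0 ≤ H x x) (hy_nonneg : 0 ≤ G y y)
    (hx : μ * G x x ≤ H x x) (hy : H y y ≤ L * G y y)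
    (h : energyNorm H x ≤ c * energyNorm H y) :
    energyNorm G x ≤ √(L / μ) * c * energyNorm G y :=
  calc energyNorm G x
    _ ≤ √μ⁻¹ * energyNorm H x :=
      energyNorm_le_sqrt_mul_energyNorm hx_nonneg ((le_inv_mul_iff₀ hμ).2 hx)
    _ ≤ √μ⁻¹ * (c * energyNorm H y) := by gcongr
    _ ≤ √μ⁻¹ * (c * (√L * energyNorm G y)) := by
      gcongr
      exact energyNorm_le_sqrt_mul_energyNorm hy_nonneg hy
    _ = √(L / μ) * c * energyNorm G y := by
      rw [div_eq_mul_inv, Real.sqrt_mul' L (inv_nonneg.2 hμ.le)]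
      ring

end EnergyNorm

section Matrix

variable {ι : Type*} [Fintype ι]

theorem isPosSemidef_toBilin'_of_posSemidef {R : Type*} [CommRing R] [PartialOrder R] [StarRing R]
    [TrivialStar R] [DecidableEq ι] {A : Matrix ι ι R} (hA : A.PosSemidef) :
    A.toBilin'.IsPosSemidef where
  isSymm := isSymm_toBilin'_iff_isSymm.2 (isHermitian_iff_isSymm.1 hA.isHermitian)
  nonneg x := by simpa only [toBilin'_apply', star_trivial] using hA.dotProduct_mulVec_nonneg x

variable {A B : Matrix ι ι ℝ} {ε : ℝ}

namespace SpecApprox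

theorem symm (h : SpecApprox ε A B) : SpecApprox ε B A := by
  have h_lower : B - Real.exp (-ε) • A = Real.exp (-ε) • (Real.exp ε • B - A) := by
    rw [smul_sub, smul_smul, ← Real.exp_add, neg_add_cancel, Real.exp_zero, one_smul]
  have h_upper : Real.exp ε • A - B = Real.exp ε • (A - Real.exp (-ε) • B) := by
    rw [smul_sub, smul_smul, ← Real.exp_add, add_neg_cancel, Real.exp_zero, one_smul]
  rw [SpecApprox, h_lower, h_upper]
  exact ⟨h.2.smul (Real.exp_pos _).le, h.1.smul (Real.exp_pos _).le⟩

theorem posDef (h : SpecApprox ε A B) (hB : B.PosDef) : A.PosDef := by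
  simpa only [sub_add_cancel] using PosDef.posSemidef_add h.1 (hB.smul (Real.exp_pos (-ε)))

theorem exp_neg_mul_toBilin'_le [DecidableEq ι] (h : SpecApprox ε A B) (x : ι → ℝ) :
    Real.exp (-ε) * B.toBilin' x x ≤ A.toBilin' x x := by
  simpa only [map_sub, map_smul, LinearMap.sub_apply, LinearMap.smul_apply, smul_eq_mul,
    sub_nonneg] using (isPosSemidef_toBilin'_of_posSemidef h.1).nonneg x

theorem toBilin'_le_exp_mul [DecidableEq ι] (h : SpecApprox ε A B) (x : ι → ℝ) :
    A.toBilin' x x ≤ Real.exp ε * B.toBilin' x x := by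
  simpa only [map_sub, map_smul, LinearMap.sub_apply, LinearMap.smul_apply, smul_eq_mul,
    sub_nonneg] using (isPosSemidef_toBilin'_of_posSemidef h.2).nonneg x

end SpecApprox

variable [DecidableEq ι]

theorem toBilin'_apply_inv_mulVec {R : Type*} [CommRing R] {M : Matrix ι ι R}
    (hM : IsUnit M) (H : Matrix ι ι R) (w v : ι → R) :
    M.toBilin' w (M⁻¹ *ᵥ (H *ᵥ v)) = H.toBilin' w v := by
  rw [toBilin'_apply', toBilin'_apply', mulVec_mulVec,
    mul_nonsing_inv M ((isUnit_iff_isUnit_det M).1 hM), one_mulVec]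

theorem energyNorm_toBilin'_sub_inv_mulVec_le {H M : Matrix ι ι ℝ} (hH : H.PosDef)
    (hApprox : SpecApprox ε M H) (v : ι → ℝ) :
    energyNorm H.toBilin' (v - M⁻¹ *ᵥ (H *ᵥ v)) ≤ cEps ε * energyNorm H.toBilin' v := by
  have hM : M.PosDef := hApprox.posDef hH
  have h_exp : Real.exp (2 * ε) = Real.exp ε ^ 2 := by
    rw [two_mul, Real.exp_add, sq]
  rw [cEps, h_exp]
  exact energyNorm_sub_le (isPosSemidef_toBilin'_of_posSemidef hH.posSemidef)
    (isPosSemidef_toBilin'_of_posSemidef hM.posSemidef) (Real.exp_pos _).le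
    (fun w ↦ toBilin'_apply_inv_mulVec hM.isUnit H w v)
    (hApprox.symm.exp_neg_mul_toBilin'_le v) (hApprox.symm.toBilin'_le_exp_mul _)

end Matrix

theorem stmt4_general {ι : Type*} [Fintype ι] [DecidableEq ι] (H M : Matrix ι ι ℝ)
    (hH : H.PosDef) (μ L' : ℝ) (hμ : 0 < μ)
    (hbound : ∀ v : ι → ℝ,
      μ * (v ⬝ᵥ v) ≤ v ⬝ᵥ (H *ᵥ v) ∧ v ⬝ᵥ (H *ᵥ v) ≤ L' * (v ⬝ᵥ v))
    (ε : ℝ) (hApprox : SpecApprox ε M H) (v : ι → ℝ) :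
    √((v - M⁻¹ *ᵥ (H *ᵥ v)) ⬝ᵥ (v - M⁻¹ *ᵥ (H *ᵥ v))) ≤
      √(L' / μ) * cEps ε * √(v ⬝ᵥ v) := by
  have h_energy := energyNorm_toBilin'_sub_inv_mulVec_le hH hApprox v
  have hH_nonneg := (isPosSemidef_toBilin'_of_posSemidef hH.posSemidef).nonneg
  simp only [← toBilin'_apply'] at hbound
  exact energyNorm_le_sqrt_div_mul_of_energyNorm_le (G := dotProductBilin ℝ ℝ) hμ
    (Real.sqrt_nonneg _) (hH_nonneg _) (dotProduct_self_star_nonneg v)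
    (hbound _).1 (hbound v).2 h_energy

/-- Euclidean-norm bound on the approximate Newton error map:
`‖v − M⁻¹ H v‖ ≤ sqrt(L'/μ) c(ε) ‖v‖`. -/
theorem stmt4 {n : ℕ} (H M : Matrix (Fin n) (Fin n) ℝ)
    (hH : H.PosDef) (hM : M.PosDef)
    (μ L' : ℝ) (hμ : 0 < μ) (hL' : 0 < L')
    (hbound : ∀ v : Fin n → ℝ,
      μ * (v ⬝ᵥ v) ≤ v ⬝ᵥ (H *ᵥ v) ∧ v ⬝ᵥ (H *ᵥ v) ≤ L' * (v ⬝ᵥ v))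
    (ε : ℝ) (hε : 0 < ε) (hApprox : SpecApprox ε M H) :
    ∀ v : Fin n → ℝ,
      Real.sqrt ((v - M⁻¹ *ᵥ (H *ᵥ v)) ⬝ᵥ (v - M⁻¹ *ᵥ (H *ᵥ v))) ≤
        Real.sqrt (L' / μ) * cEps ε * Real.sqrt (v ⬝ᵥ v) := by
  exact stmt4_general H M hH μ L' hμ hbound ε hApprox
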